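/- Let n ≥ 1 and ρ : Fin n → ℂ, and let S_ρ be the substitution endomorphism of ℂ[x₁,…,xₙ] determined by x_i ↦ ρ_i·x_i. For any polynomial d ∈ ℂ[x₁,…,xₙ], define f to be the resonant truncation of d: the coefficient of x^a in f equals the coefficient of x^a in d when a is resonant for ρ, and equals 0 otherwise. Then: (i) there exists a polynomial q with S_ρ(q) − q = d − f; and (ii) f is the unique polynomial supported on resonant multi-indices such that d − f lies in the range of the linear map q ↦ S_ρ(q) − q. -/

import Mathlib

/-!
The substitution `S_ρ` is diagonal in the monomial basis, with eigenvalue `∏ i, ρ i ^ a i` on `x^a`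
(`coeff_aeval_C_mul_X`). Hence `S_ρ q - q = h` decouples into the scalar equations
`(∏ i, ρ i ^ a i - 1) * q_a = h_a`. At a non-resonant `a` this is solved by division, and at a
resonant `a` it forces `h_a = 0`, which for `h = d - g` says `g_a = d_a`.
-/

open MvPolynomial

theorem coeff_aeval_C_mul_X {n : ℕ} (ρ : Fin n → ℂ) (q : MvPolynomial (Fin n) ℂ)
    (a : Fin n →₀ ℕ) :
    (aeval (fun i => (C (ρ i) * X i : MvPolynomial (Fin n) ℂ)) q).coeff a =
      (∏ i, ρ i ^ a i) * q.coeff a := by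
  induction q using MvPolynomial.induction_on' with
  | monomial b c =>
    have h : aeval (fun i => (C (ρ i) * X i : MvPolynomial (Fin n) ℂ)) (monomial b c) =
        monomial b ((∏ i, ρ i ^ b i) * c) := by
      rw [aeval_monomial, Finsupp.prod_fintype _ _ (fun i => pow_zero _), monomial_eq,
        Finsupp.prod_fintype _ _ (fun i => pow_zero _)]
      simp only [mul_pow, Finset.prod_mul_distrib, algebraMap_eq, C_mul, map_prod, map_pow]
      ring
    rw [h, coeff_monomial, coeff_monomial]
    split_ifs with hab
    · rw [hab]
    · simp
  | add p q hp hq => rw [map_add, coeff_add, coeff_add, hp, hq, mul_add]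

/-- Equations (3.14)–(3.18): simultaneous determination of the conjugating
polynomial and the normal form coefficients.  Let `f` be the resonant
truncation of `d`.  Then (i) `d − f` lies in the range of `q ↦ S_ρ(q) − q`, and
(ii) `f` is the unique polynomial supported on resonant multi-indices with this
property. -/
theorem resonant_truncation_normal_form
    (n : ℕ) (hn : 1 ≤ n) (ρ : Fin n → ℂ)
    (d f : MvPolynomial (Fin n) ℂ)
    (hf : ∀ a : Fin n →₀ ℕ,
      f.coeff a = if (∏ i, ρ i ^ a i) = 1 then d.coeff a else 0) :
    (∃ q : MvPolynomial (Fin n) ℂ,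
        (aeval (fun i => (C (ρ i) * X i : MvPolynomial (Fin n) ℂ))) q - q = d - f) ∧
    (∀ g : MvPolynomial (Fin n) ℂ,
      (∀ a ∈ g.support, (∏ i, ρ i ^ a i) = 1) →
      (∃ q : MvPolynomial (Fin n) ℂ,
        (aeval (fun i => (C (ρ i) * X i : MvPolynomial (Fin n) ℂ))) q - q = d - g) →
      g = f) := by
  refine ⟨⟨∑ b ∈ d.support, monomial b (d.coeff b / ((∏ i, ρ i ^ b i) - 1)), ?_⟩, ?_⟩
  · ext a
    -- Outside the support of `d` the quotient is zero, so this holds for every `a`.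
    have hq : (∑ b ∈ d.support, monomial b (d.coeff b / ((∏ i, ρ i ^ b i) - 1))).coeff a =
        d.coeff a / ((∏ i, ρ i ^ a i) - 1) := by
      simp only [coeff_sum, coeff_monomial, Finset.sum_ite_eq']
      split_ifs with ha
      · rfl
      · rw [notMem_support_iff.mp ha, zero_div]
    rw [coeff_sub, coeff_sub, coeff_aeval_C_mul_X, hq, hf]
    split_ifs with h
    · rw [h]; ring
    · have h' : (∏ i, ρ i ^ a i) - 1 ≠ 0 := sub_ne_zero.mpr h
      rw [sub_zero, ← sub_one_mul, mul_div_cancel₀ _ h']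
  · rintro g hg ⟨q, hq⟩
    ext a
    have ha := congrArg (coeff a) hq
    rw [coeff_sub, coeff_sub, coeff_aeval_C_mul_X] at ha
    rw [hf]
    split_ifs with h
    · rw [h, one_mul, sub_self] at ha
      exact (sub_eq_zero.mp ha.symm).symm
    · by_contra hne
      exact h (hg a (mem_support_iff.mpr hne))
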